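/- arXiv:1702.01677 — 2 statements merged into one kernel-verified Lean document; each statement's English description precedes it below -/
import Mathlib

section
/- Let G be a task graph with present bias β ∈ (0,1], let c̃* be a cost configuration motivating for a reward r, let P = v_1,…,v_m (s = v_1, t = v_m, m ≥ 3) be a path the agent may take under c̃*, let ε > 0, and let c̃ be the PathAndFence cost configuration for (P,ε). Then for every 1 ≤ i < m: η_c̃(v_i,v_{i+1}) ≤ η_{c̃*}(v_i,v_{i+1}) + βε·(m−1−i)/(m−2) and d_c̃(v_i) ≤ d_{c̃*}(v_i) + βε·(m−1−i)/(m−2). In particular η_c̃(v_i,v_{i+1}) ≤ η_{c̃*}(v_i,v_{i+1}) + βε, so c̃ is motivating for the reward r + ε. -/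
/-!
The proof rests on the Bellman inequalities for `dcost` (`dcost_le_add`, `le_dcost`), with which
walks need not be handled explicitly, and on induction along the edges of the DAG.

Write `d'`, `d*` for the distances to `t` under the fence and under `cstar`, `η'`, `η*` for the
perceived costs, `m` for the length of the path, and number the path `p 0, …, p (m - 1) = t`. Put
`δ = β ε / (m - 2)` and `B k = δ (m - 2 - k)`, truncated at `0`. The claim proved by induction is
`d' u ≤ d* u + B k` for every node `u` from which no `p j` with `j < k` can be reached
(`fence_dcost_le`). Off the path the fence charges nothing and the bound propagates from the
successors of `u`. At `u = p i` all successors satisfy the claim with `k = i + 1`, and the fence on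
an edge `(u, w)` either is zero, or lifts the perceived cost of that edge to `η' (u, p (i + 1)) + δ`;
in the latter case
`d' u ≤ η' (u, p (i + 1)) + δ + (1 - β) d' w ≤ η* (u, p (i + 1)) + (1 - β) d* w + B (i + 1) + δ`,
and `η* (u, p (i + 1)) ≤ η* (u, w)` since the agent takes the edge `(u, p (i + 1))` under `cstar`.
For `i = m - 2`, where `B i = B (i + 1) = 0`, the edge `(u, t)` itself gives
`d' u ≤ c (u, t) ≤ η* (u, t) ≤ η* (u, w)`, and `η* (u, w)` is at most the cost of `(u, w)` under
`cstar` plus `d* w`.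

The bound on `η'` follows at once. Under the fence every edge leaving `p i` for a node other than
`p (i + 1)` is dearer by at least `δ > 0`, so the agent can only follow the path, and the bound on
`η'` says that she is willing to do so for the reward `r + ε`.
-/

/-!
Framework: task graphs, present-biased agents, perceived costs, greedy walks,
motivating rewards, cost configurations and subgraphs
(Kleinberg–Oren model, following Albers–Kraft).
-/

variable {V : Type} [Fintype V] [DecidableEq V]

/-- The list of (directed) edges traversed by a walk given as a list of vertices. -/
def walkEdges (p : List V) : List (V × V) := p.zip p.tail

/-- `p` is a walk in the edge set `E`: consecutive vertices are joined by edges. -/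
def IsWalk (E : Finset (V × V)) (p : List V) : Prop :=
  List.Chain' (fun u v : V => (u, v) ∈ E) p

/-- `p` is a walk in `E` from `a` to `b`. -/
def IsWalkFrom (E : Finset (V × V)) (p : List V) (a b : V) : Prop :=
  IsWalk E p ∧ p.head? = some a ∧ p.getLast? = some b

/-- There is a walk in `E` from `a` to `b`. -/
def Reaches (E : Finset (V × V)) (a b : V) : Prop :=
  ∃ p : List V, IsWalkFrom E p a b

/-- Total cost of a walk. -/
noncomputable def walkCost (c : V × V → ℝ) (p : List V) : ℝ :=
  ((walkEdges p).map c).sum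

/-- A task graph: a finite DAG with source `s`, target `t`, nonnegative edge
costs, in which every node lies on some directed path from `s` to `t`. -/
structure TaskGraph (V : Type) [Fintype V] [DecidableEq V] where
  E : Finset (V × V)
  s : V
  t : V
  c : V × V → ℝ
  c_nonneg : ∀ e ∈ E, 0 ≤ c e
  acyclic : ∀ p : List V, IsWalk E p → p.Nodup
  onPath : ∀ v : V, ∃ p : List V, IsWalkFrom E p s t ∧ v ∈ p

/-- `dcost E c t v` : cost of a cheapest walk from `v` to `t` in `E` w.r.t. costs `c`. -/
noncomputable def dcost (E : Finset (V × V)) (c : V × V → ℝ) (t v : V) : ℝ :=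
  sInf (walkCost c '' {p : List V | IsWalkFrom E p v t})

/-- Perceived cost `η(v,w) = c(v,w) + β d(w)` of an edge for a `β`-present-biased agent. -/
noncomputable def etaCost (E : Finset (V × V)) (c : V × V → ℝ) (t : V) (β : ℝ)
    (e : V × V) : ℝ :=
  c e + β * dcost E c t e.2

/-- Lowest perceived cost `ζ(v)`: the infimum of `η(v,w)` over edges `(v,w) ∈ E`
whose head `w` admits a continuation to `t` (i.e. over the agent's possible plans). -/
noncomputable def zetaCost (E : Finset (V × V)) (c : V × V → ℝ) (t : V) (β : ℝ)
    (v : V) : ℝ :=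
  sInf {x : ℝ | ∃ w : V, (v, w) ∈ E ∧ Reaches E w t ∧ etaCost E c t β (v, w) = x}

/-- One step of the agent's greedy walk for reward `r`: she traverses only
edges realizing the lowest perceived cost, and only if `ζ(v) ≤ β r`. -/
def GreedyStep (E : Finset (V × V)) (c : V × V → ℝ) (t : V) (β r : ℝ) (v w : V) : Prop :=
  v ≠ t ∧ (v, w) ∈ E ∧ Reaches E w t ∧
    etaCost E c t β (v, w) = zetaCost E c t β v ∧ zetaCost E c t β v ≤ β * r

/-- Nodes the agent may visit on some greedy walk from `s`. -/
inductive AgentReach (E : Finset (V × V)) (c : V × V → ℝ) (s t : V) (β r : ℝ) : V → Prop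
  | start : AgentReach E c s t β r s
  | step {v w : V} : AgentReach E c s t β r v → GreedyStep E c t β r v w →
      AgentReach E c s t β r w

/-- The task graph (with edge set `E`, costs `c`) is motivating for reward `r`:
at every node the agent may reach, she neither abandons nor gets stuck,
i.e. she can always perform a greedy step (hence, the graph being a finite DAG,
she reaches `t` on every greedy walk). -/
def Motivating (E : Finset (V × V)) (c : V × V → ℝ) (s t : V) (β r : ℝ) : Prop :=
  ∀ v : V, AgentReach E c s t β r v → v ≠ t → ∃ w : V, GreedyStep E c t β r v w

/-- A complete greedy walk of the agent from `s` to `t`. -/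
def AgentWalk (E : Finset (V × V)) (c : V × V → ℝ) (s t : V) (β r : ℝ) (p : List V) : Prop :=
  IsWalkFrom E p s t ∧ List.Chain' (GreedyStep E c t β r) p

/-- An initial segment of a greedy walk of the agent starting at `s`. -/
def GreedyPrefix (E : Finset (V × V)) (c : V × V → ℝ) (s t : V) (β r : ℝ) (p : List V) : Prop :=
  p.head? = some s ∧ List.Chain' (GreedyStep E c t β r) p

/-- A cost configuration: nonnegative extra costs on the edges. -/
def CostConfig (c' : V × V → ℝ) : Prop := ∀ e : V × V, 0 ≤ c' e

/-- The modified costs obtained by applying a cost configuration to `G`. -/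
noncomputable def addc (G : TaskGraph V) (c' : V × V → ℝ) : V × V → ℝ :=
  fun e => G.c e + c' e

/-- The cost configuration `c'` is motivating for reward `r` on `G`. -/
def MotivatingConfig (G : TaskGraph V) (β r : ℝ) (c' : V × V → ℝ) : Prop :=
  Motivating G.E (addc G c') G.s G.t β r

/-- The subgraph of `G` with edge set `E'` (retaining an `s`–`t` path) is
motivating for reward `r`; all quantities are computed within the subgraph. -/
def MotivatingSubgraph (G : TaskGraph V) (β r : ℝ) (E' : Finset (V × V)) : Prop :=
  E' ⊆ G.E ∧ (∃ p : List V, IsWalkFrom E' p G.s G.t) ∧ Motivating E' G.c G.s G.t β r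

/-- The PathAndFence cost configuration for the path `p = v_1, …, v_m` and the
value `ε`: it charges nothing on edges of `p`, on edges not leaving a node of `p`
and on edges leaving `t = v_m`; on each edge `(v_i, w)` with `w ≠ v_{i+1}` it
charges `max {0, η(v_i, v_{i+1}) − η(v_i, w) + βε/(m−2)}`, where (the graph being
acyclic) the perceived costs `η` may be evaluated with the final configuration. -/
def IsPathAndFence (G : TaskGraph V) (β ε : ℝ) (p : List V) (c' : V × V → ℝ) : Prop :=
  (∀ e ∈ walkEdges p, c' e = 0) ∧
  (∀ v w : V, v ∉ p → c' (v, w) = 0) ∧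
  (∀ w : V, c' (G.t, w) = 0) ∧
  (∀ e : V × V, e ∉ G.E → c' e = 0) ∧
  (∀ (i : ℕ) (h : i + 1 < p.length) (w : V),
      (p.get ⟨i, by omega⟩, w) ∈ G.E → w ≠ p.get ⟨i + 1, h⟩ →
      c' (p.get ⟨i, by omega⟩, w) =
        max 0 (etaCost G.E (addc G c') G.t β (p.get ⟨i, by omega⟩, p.get ⟨i + 1, h⟩)
          - (G.c (p.get ⟨i, by omega⟩, w) + β * dcost G.E (addc G c') G.t w)
          + β * ε / ((p.length : ℝ) - 2)))

/-! ### Distances -/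

theorem walkCost_cons_cons (c : V × V → ℝ) (v w : V) (l : List V) :
    walkCost c (v :: w :: l) = c (v, w) + walkCost c (w :: l) := by
  simp [walkCost, walkEdges]

theorem walkCost_nonneg {E : Finset (V × V)} {c : V × V → ℝ} (hc : ∀ e ∈ E, 0 ≤ c e) :
    ∀ q : List V, IsWalk E q → 0 ≤ walkCost c q
  | [], _ => by simp [walkCost, walkEdges]
  | [_], _ => by simp [walkCost, walkEdges]
  | v :: w :: l, h => by
    obtain ⟨h1, h2⟩ := List.isChain_cons_cons.1 h
    rw [walkCost_cons_cons]
    exact add_nonneg (hc _ h1) (walkCost_nonneg hc (w :: l) h2)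

theorem bddBelow_walkCost {E : Finset (V × V)} {c : V × V → ℝ} (hc : ∀ e ∈ E, 0 ≤ c e)
    (t v : V) : BddBelow (walkCost c '' {p : List V | IsWalkFrom E p v t}) := by
  refine ⟨0, ?_⟩
  rintro _ ⟨q, hq, rfl⟩
  exact walkCost_nonneg hc q hq.1

theorem dcost_nonneg {E : Finset (V × V)} {c : V × V → ℝ} (hc : ∀ e ∈ E, 0 ≤ c e)
    (t v : V) : 0 ≤ dcost E c t v := by
  refine Real.sInf_nonneg ?_
  rintro _ ⟨q, hq, rfl⟩
  exact walkCost_nonneg hc q hq.1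

theorem dcost_self {E : Finset (V × V)} {c : V × V → ℝ} (hc : ∀ e ∈ E, 0 ≤ c e)
    (t : V) : dcost E c t t = 0 := by
  refine le_antisymm ?_ (dcost_nonneg hc t t)
  refine csInf_le (bddBelow_walkCost hc t t) ⟨[t], ⟨List.isChain_singleton _, rfl, rfl⟩, ?_⟩
  simp [walkCost, walkEdges]

/-- First Bellman inequality. The hypothesis `Reaches E w t` keeps `dcost E c t w` from being the
junk value of an empty infimum. -/
theorem dcost_le_add {E : Finset (V × V)} {c : V × V → ℝ} (hc : ∀ e ∈ E, 0 ≤ c e)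
    {t v w : V} (hvw : (v, w) ∈ E) (hw : Reaches E w t) :
    dcost E c t v ≤ c (v, w) + dcost E c t w := by
  rw [← sub_le_iff_le_add']
  obtain ⟨q₀, hq₀⟩ := hw
  refine le_csInf ⟨_, q₀, hq₀, rfl⟩ ?_
  rintro _ ⟨q, ⟨hq1, hq2, hq3⟩, rfl⟩
  rw [sub_le_iff_le_add']
  obtain ⟨l, rfl⟩ : ∃ l, q = w :: l := by
    cases q with
    | nil => simp at hq2
    | cons a l => exact ⟨l, by simpa using hq2⟩
  rw [← walkCost_cons_cons]
  refine csInf_le (bddBelow_walkCost hc t v) ⟨v :: w :: l, ⟨?_, rfl, ?_⟩, rfl⟩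
  · exact List.isChain_cons_cons.2 ⟨hvw, hq1⟩
  · simpa [List.getLast?_cons_cons] using hq3

/-- Second Bellman inequality: away from `t`, a lower bound over all first edges bounds `dcost`. -/
theorem le_dcost {E : Finset (V × V)} {c : V × V → ℝ} (hc : ∀ e ∈ E, 0 ≤ c e)
    {t v : V} (hv : Reaches E v t) (hvt : v ≠ t) {x : ℝ}
    (hx : ∀ w, (v, w) ∈ E → x ≤ c (v, w) + dcost E c t w) : x ≤ dcost E c t v := by
  obtain ⟨q₀, hq₀⟩ := hv
  refine le_csInf ⟨_, q₀, hq₀, rfl⟩ ?_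
  rintro _ ⟨q, ⟨hq1, hq2, hq3⟩, rfl⟩
  match q, hq1, hq2, hq3 with
  | [], _, h, _ => simp at h
  | [a], _, h, h' =>
    simp only [List.head?_cons, List.getLast?_singleton, Option.some.injEq] at h h'
    exact absurd (h.symm.trans h') hvt
  | a :: w :: l, h, h', h'' =>
    obtain rfl : a = v := by simpa using h'
    obtain ⟨h1, h2⟩ := List.isChain_cons_cons.1 h
    rw [walkCost_cons_cons]
    refine (hx w h1).trans (add_le_add le_rfl (csInf_le (bddBelow_walkCost hc t w) ?_))
    exact ⟨w :: l, ⟨h2, rfl, by simpa [List.getLast?_cons_cons] using h''⟩, rfl⟩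

theorem etaCost_nonneg {E : Finset (V × V)} {c : V × V → ℝ} (hc : ∀ e ∈ E, 0 ≤ c e)
    (t : V) {β : ℝ} (hβ : 0 ≤ β) {e : V × V} (he : e ∈ E) : 0 ≤ etaCost E c t β e :=
  add_nonneg (hc e he) (mul_nonneg hβ (dcost_nonneg hc t _))

theorem zetaCost_le {E : Finset (V × V)} {c : V × V → ℝ} (hc : ∀ e ∈ E, 0 ≤ c e)
    {t : V} {β : ℝ} (hβ : 0 ≤ β) {v w : V} (hvw : (v, w) ∈ E) (hw : Reaches E w t) :
    zetaCost E c t β v ≤ etaCost E c t β (v, w) := by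
  refine csInf_le ⟨0, ?_⟩ ⟨w, hvw, hw, rfl⟩
  rintro _ ⟨w', h, -, rfl⟩
  exact etaCost_nonneg hc t hβ h

/-! ### Reachability in a task graph -/

/-- Reachability along edges of `G`, including the trivial walk. -/
def TaskGraph.Path (G : TaskGraph V) : V → V → Prop :=
  Relation.ReflTransGen fun a b => (a, b) ∈ G.E

theorem TaskGraph.reaches_t (G : TaskGraph V) (v : V) : Reaches G.E v G.t := by
  obtain ⟨q, ⟨h1, -, h3⟩, hv⟩ := G.onPath v
  obtain ⟨a, b, rfl⟩ := List.append_of_mem hv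
  refine ⟨v :: b, List.IsChain.suffix h1 (List.suffix_append _ _), rfl, ?_⟩
  simpa [List.getLast?_append] using h3

theorem TaskGraph.path_t (G : TaskGraph V) (v : V) : G.Path v G.t := by
  obtain ⟨q, h1, h2, h3⟩ := G.reaches_t v
  cases q with
  | nil => simp at h2
  | cons a l =>
    obtain rfl : a = v := by simpa using h2
    refine List.relationReflTransGen_of_exists_isChain_cons l h1 ?_
    rw [List.getLast?_eq_getLast_of_ne_nil (List.cons_ne_nil _ _)] at h3
    simpa using h3

theorem TaskGraph.not_path_of_edge (G : TaskGraph V) {v w : V} (h : (v, w) ∈ G.E) :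
    ¬ G.Path w v := by
  intro hp
  obtain ⟨l, hl1, hl2⟩ := List.exists_isChain_cons_of_relationReflTransGen hp
  have hnd : (v :: w :: l).Nodup := G.acyclic _ (List.isChain_cons_cons.2 ⟨h, hl1⟩)
  rw [List.nodup_cons] at hnd
  exact hnd.1 (hl2 ▸ List.getLast_mem _)

theorem TaskGraph.wellFounded (G : TaskGraph V) :
    WellFounded fun w v : V => (v, w) ∈ G.E := by
  have h : WellFounded fun w v : V => Relation.TransGen (fun a b => (a, b) ∈ G.E) v w := by
    have : IsTrans V fun w v : V => Relation.TransGen (fun a b => (a, b) ∈ G.E) v w :=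
      ⟨fun _ _ _ h1 h2 => h2.trans h1⟩
    have : Std.Irrefl fun w v : V => Relation.TransGen (fun a b => (a, b) ∈ G.E) v w := by
      refine ⟨fun v hv => ?_⟩
      obtain ⟨w, hvw, hwv⟩ := Relation.TransGen.head'_iff.1 hv
      exact G.not_path_of_edge hvw hwv
    exact Finite.wellFounded_of_trans_of_irrefl _
  exact Subrelation.wf (fun h => Relation.TransGen.single h) h

theorem path_of_isWalk (G : TaskGraph V) {p : List V} (hp : IsWalk G.E p) {i j : ℕ}
    (hij : i ≤ j) (hj : j < p.length) : G.Path (p[i]'(by omega)) p[j] := by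
  induction j, hij using Nat.le_induction with
  | base => exact Relation.ReflTransGen.refl
  | succ j hij ih =>
    exact (ih (by omega)).tail (List.isChain_iff_getElem.1 hp j hj)

/-! ### The fence -/

theorem fence_nonneg {G : TaskGraph V} {β ε : ℝ} {p : List V} {c' : V × V → ℝ}
    (hpf : IsPathAndFence G β ε p c') (hlast : p.getLast? = some G.t) (e : V × V) :
    0 ≤ c' e := by
  obtain ⟨h1, h2, h3, h4, h5⟩ := hpf
  obtain ⟨v, w⟩ := e
  by_cases hE : (v, w) ∈ G.E
  swap
  · exact (h4 _ hE).ge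
  by_cases hv : v ∈ p
  swap
  · exact (h2 v w hv).ge
  obtain ⟨i, hi, rfl⟩ := List.getElem_of_mem hv
  by_cases hi' : i + 1 < p.length
  · by_cases hw : w = p.get ⟨i + 1, hi'⟩
    · refine (h1 _ ?_).ge
      subst hw
      rw [walkEdges, List.mem_iff_getElem]
      exact ⟨i, by simp; omega, by simp⟩
    · have := h5 i hi' w hE hw
      simp only [List.get_eq_getElem] at this
      rw [this]
      exact le_max_left _ _
  · have : p[i] = G.t := by
      rw [List.getLast?_eq_getElem?, List.getElem?_eq_some_iff] at hlast
      obtain ⟨_, h⟩ := hlast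
      rw [← h]
      congr 1
      omega
    rw [this]
    exact (h3 w).ge

theorem fence_path {G : TaskGraph V} {β ε : ℝ} {p : List V} {c' : V × V → ℝ}
    (hpf : IsPathAndFence G β ε p c') {i : ℕ} (h : i + 1 < p.length) :
    c' (p[i], p[i + 1]) = 0 := by
  refine hpf.1 _ ?_
  rw [walkEdges, List.mem_iff_getElem]
  exact ⟨i, by simp; omega, by simp⟩

/-- The distance bound in the form suited to induction along edges: `B k = β ε / (m - 2) *
(m - 2 - k)` with truncated subtraction, for a node from which only path nodes of index at least `k`
can be reached. -/
theorem fence_dcost_le {G : TaskGraph V} {β : ℝ} (hβ0 : 0 < β) (hβ1 : β ≤ 1)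
    {cstar : V × V → ℝ} (hcstar : CostConfig cstar) {r : ℝ} {p : List V} (hlen : 3 ≤ p.length)
    (hwalk : AgentWalk G.E (addc G cstar) G.s G.t β r p)
    {ε : ℝ} (hε : 0 < ε) {c' : V × V → ℝ} (hpf : IsPathAndFence G β ε p c') (u : V) :
    ∀ k : ℕ, (∀ (j : ℕ) (hj : j < p.length), G.Path u p[j] → k ≤ j) →
      dcost G.E (addc G c') G.t u ≤ dcost G.E (addc G cstar) G.t u
        + β * ε / ((p.length : ℝ) - 2) * ((p.length - 2 - k : ℕ) : ℝ) := by
  obtain ⟨⟨hw, hhead, hlast⟩, hgreedy⟩ := hwalk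
  have hc' : ∀ e ∈ G.E, 0 ≤ addc G c' e := fun e he =>
    add_nonneg (G.c_nonneg e he) (fence_nonneg hpf hlast e)
  have hcs : ∀ e ∈ G.E, 0 ≤ addc G cstar e := fun e he =>
    add_nonneg (G.c_nonneg e he) (hcstar e)
  have hm : (3 : ℝ) ≤ p.length := by exact_mod_cast hlen
  set δ : ℝ := β * ε / ((p.length : ℝ) - 2) with hδ
  have hδ0 : 0 < δ := div_pos (mul_pos hβ0 hε) (by linarith)
  induction u using G.wellFounded.induction with
  | _ u ih =>
  intro k hk
  have hB0 : 0 ≤ δ * ((p.length - 2 - k : ℕ) : ℝ) := by positivity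
  by_cases hut : u = G.t
  · subst hut
    rw [dcost_self hc', dcost_self hcs]
    linarith
  rw [← sub_le_iff_le_add]
  by_cases hup : u ∈ p
  swap
  · refine le_dcost hcs (G.reaches_t u) hut fun w huw => ?_
    have h1 := ih w huw k fun j hj hpath => hk j hj (Relation.ReflTransGen.head huw hpath)
    have h2 := dcost_le_add hc' huw (G.reaches_t w)
    have h3 := hpf.2.1 u w hup
    have h4 := hcstar (u, w)
    simp only [addc] at h1 h2 ⊢
    linarith
  obtain ⟨i, hi, rfl⟩ := List.getElem_of_mem hup
  have hki : k ≤ i := hk i hi Relation.ReflTransGen.refl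
  have hBi : δ * ((p.length - 2 - i : ℕ) : ℝ) ≤ δ * ((p.length - 2 - k : ℕ) : ℝ) := by
    gcongr
  have hpt : p[p.length - 1] = G.t := by
    rw [List.getLast?_eq_getElem?, List.getElem?_eq_some_iff] at hlast
    exact hlast.2
  have hi' : i + 1 < p.length := by
    by_contra hcon
    apply hut
    rw [← hpt]
    congr 1
    omega
  have hedge : (p[i], p[i + 1]) ∈ G.E := List.isChain_iff_getElem.1 hw i hi'
  have hsucc : ∀ w, (p[i], w) ∈ G.E →
      ∀ (j : ℕ) (hj : j < p.length), G.Path w p[j] → i + 1 ≤ j := by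
    intro w hiw j hj hpath
    by_contra hcon
    exact G.not_path_of_edge hiw (hpath.trans (path_of_isWalk G hw (by omega) hi))
  have hih := fun w hiw => ih w hiw (i + 1) (hsucc w hiw)
  have hstep : GreedyStep G.E (addc G cstar) G.t β r p[i] p[i + 1] :=
    List.isChain_iff_getElem.1 hgreedy i hi'
  have hpath0 : c' (p[i], p[i + 1]) = 0 := fence_path hpf hi'
  have hfirst := dcost_le_add hc' hedge (G.reaches_t _)
  have hcs0 := hcstar (p[i], p[i + 1])
  refine le_dcost hcs (G.reaches_t _) hut fun w hiw => ?_
  have hη : etaCost G.E (addc G cstar) G.t β (p[i], p[i + 1])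
      ≤ etaCost G.E (addc G cstar) G.t β (p[i], w) :=
    hstep.2.2.2.1.trans_le (zetaCost_le hcs hβ0.le hiw (G.reaches_t w))
  have hdw := dcost_nonneg hcs G.t w
  by_cases hilast : i + 2 = p.length
  · -- The last edge of the path: `d' u ≤ c (u, t)`, and `B` vanishes.
    have hpi : p[i + 1] = G.t := by
      rw [← hpt]
      congr 1
      omega
    have h0 : dcost G.E (addc G c') G.t p[i + 1] = 0 := by rw [hpi, dcost_self hc']
    have h0' : dcost G.E (addc G cstar) G.t p[i + 1] = 0 := by rw [hpi, dcost_self hcs]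
    have : β * dcost G.E (addc G cstar) G.t w ≤ 1 * dcost G.E (addc G cstar) G.t w := by gcongr
    simp only [etaCost, h0', h0, addc, hpath0] at hη hfirst this ⊢
    linarith
  have hB : δ * ((p.length - 2 - i : ℕ) : ℝ) = δ * ((p.length - 2 - (i + 1) : ℕ) : ℝ) + δ := by
    have : p.length - 2 - i = p.length - 2 - (i + 1) + 1 := by omega
    rw [this]
    push_cast
    ring
  have hihw := hih w hiw
  have hihn := hih _ hedge
  have hB1 : 0 ≤ δ * ((p.length - 2 - (i + 1) : ℕ) : ℝ) := by positivity
  set B' : ℝ := δ * ((p.length - 2 - (i + 1) : ℕ) : ℝ)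
  by_cases hwp : w = p[i + 1]
  · subst hwp
    simp only [addc, hpath0] at hfirst hihn ⊢
    linarith
  have hfence := hpf.2.2.2.2 i hi' w hiw hwp
  simp only [List.get_eq_getElem] at hfence
  have hsecond := dcost_le_add hc' hiw (G.reaches_t w)
  have hcsw := hcstar (p[i], w)
  rcases max_choice (0 : ℝ) (etaCost G.E (addc G c') G.t β (p[i], p[i + 1])
    - (G.c (p[i], w) + β * dcost G.E (addc G c') G.t w) + δ) with hmax | hmax
  · rw [hmax] at hfence
    simp only [addc, hfence] at hsecond hihw ⊢
    linarith
  · rw [hmax] at hfence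
    have e1 : (1 - β) * dcost G.E (addc G c') G.t w
        ≤ (1 - β) * (dcost G.E (addc G cstar) G.t w + B') :=
      mul_le_mul_of_nonneg_left hihw (by linarith)
    have e2 : β * dcost G.E (addc G c') G.t p[i + 1]
        ≤ β * (dcost G.E (addc G cstar) G.t p[i + 1] + B') :=
      mul_le_mul_of_nonneg_left hihn hβ0.le
    simp only [etaCost, addc, hfence, hpath0] at hsecond hη e1 e2 ⊢
    linarith

/-- Let `c*` be motivating for reward `r`, let
`p = v_1, …, v_m` (`s = v_1`, `t = v_m`, `m ≥ 3`) be a path the agent may take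
under `c*`, let `ε > 0` and let `c'` be the PathAndFence configuration for `(p, ε)`.
Then for every `1 ≤ i < m` (here `i` is `0`-indexed, so the paper's `i` is `i + 1`):
`η_{c'}(v_i, v_{i+1}) ≤ η_{c*}(v_i, v_{i+1}) + βε (m−1−i)/(m−2)` and
`d_{c'}(v_i) ≤ d_{c*}(v_i) + βε (m−1−i)/(m−2)`; in particular
`η_{c'}(v_i, v_{i+1}) ≤ η_{c*}(v_i, v_{i+1}) + βε`, and `c'` is motivating for
the reward `r + ε`. -/
theorem stmt_7 (G : TaskGraph V) (β : ℝ) (hβ0 : 0 < β) (hβ1 : β ≤ 1)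
    (cstar : V × V → ℝ) (hcstar : CostConfig cstar) (r : ℝ) (hr : 0 < r)
    (hmot : MotivatingConfig G β r cstar)
    (p : List V) (hlen : 3 ≤ p.length)
    (hwalk : AgentWalk G.E (addc G cstar) G.s G.t β r p)
    (ε : ℝ) (hε : 0 < ε) (c' : V × V → ℝ)
    (hpf : IsPathAndFence G β ε p c') :
    (∀ (i : ℕ) (h : i + 1 < p.length),
        etaCost G.E (addc G c') G.t β (p.get ⟨i, by omega⟩, p.get ⟨i + 1, h⟩)
            ≤ etaCost G.E (addc G cstar) G.t β (p.get ⟨i, by omega⟩, p.get ⟨i + 1, h⟩)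
              + β * ε * (((p.length : ℝ) - 1 - ((i : ℝ) + 1)) / ((p.length : ℝ) - 2)) ∧
          dcost G.E (addc G c') G.t (p.get ⟨i, by omega⟩)
            ≤ dcost G.E (addc G cstar) G.t (p.get ⟨i, by omega⟩)
              + β * ε * (((p.length : ℝ) - 1 - ((i : ℝ) + 1)) / ((p.length : ℝ) - 2)) ∧
          etaCost G.E (addc G c') G.t β (p.get ⟨i, by omega⟩, p.get ⟨i + 1, h⟩)
            ≤ etaCost G.E (addc G cstar) G.t β (p.get ⟨i, by omega⟩, p.get ⟨i + 1, h⟩)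
              + β * ε) ∧
      MotivatingConfig G β (r + ε) c' := by
  have hw := hwalk.1.1
  have hlast := hwalk.1.2.2
  have hc' : ∀ e ∈ G.E, 0 ≤ addc G c' e := fun e he =>
    add_nonneg (G.c_nonneg e he) (fence_nonneg hpf hlast e)
  have hm : (3 : ℝ) ≤ p.length := by exact_mod_cast hlen
  have hδ0 : 0 < β * ε / ((p.length : ℝ) - 2) := div_pos (mul_pos hβ0 hε) (by linarith)
  have hd := fun i (hi : i < p.length) =>
    fence_dcost_le hβ0 hβ1 hcstar hlen hwalk hε hpf p[i] i fun j hj hpath => by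
      by_contra hcon
      have hji : G.Path p[j + 1] p[i] := path_of_isWalk G hw (by omega) hi
      exact G.not_path_of_edge (List.isChain_iff_getElem.1 hw j (by omega)) (hji.trans hpath)
  have hedge : ∀ (i : ℕ) (h : i + 1 < p.length), (p[i], p[i + 1]) ∈ G.E :=
    fun i h => List.isChain_iff_getElem.1 hw i h
  have hB : ∀ i : ℕ, i + 1 < p.length →
      β * ε / ((p.length : ℝ) - 2) * ((p.length - 2 - i : ℕ) : ℝ)
        = β * ε * (((p.length : ℝ) - 1 - ((i : ℝ) + 1)) / ((p.length : ℝ) - 2)) := by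
    intro i h
    rw [Nat.sub_sub, Nat.cast_sub (by omega)]
    push_cast
    ring
  have hB1 : ∀ i : ℕ,
      β * ε * (((p.length : ℝ) - 1 - ((i : ℝ) + 1)) / ((p.length : ℝ) - 2)) ≤ β * ε := by
    intro i
    refine mul_le_of_le_one_right (mul_pos hβ0 hε).le ?_
    rw [div_le_one (by linarith)]
    have : (0 : ℝ) ≤ i := Nat.cast_nonneg i
    linarith
  have hη : ∀ (i : ℕ) (h : i + 1 < p.length),
      etaCost G.E (addc G c') G.t β (p[i], p[i + 1])
        ≤ etaCost G.E (addc G cstar) G.t β (p[i], p[i + 1])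
          + β * ε * (((p.length : ℝ) - 1 - ((i : ℝ) + 1)) / ((p.length : ℝ) - 2)) := by
    intro i h
    rw [← hB i h]
    have h1 := mul_le_mul_of_nonneg_left (hd (i + 1) h) hβ0.le
    have h2 : β * (β * ε / ((p.length : ℝ) - 2) * ((p.length - 2 - (i + 1) : ℕ) : ℝ))
        ≤ β * ε / ((p.length : ℝ) - 2) * ((p.length - 2 - i : ℕ) : ℝ) := by
      refine (mul_le_of_le_one_left (by positivity) hβ1).trans ?_
      gcongr
      omega
    have h3 := hcstar (p[i], p[i + 1])
    simp only [etaCost, addc, fence_path hpf h] at h1 ⊢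
    linarith
  refine ⟨fun i h => ⟨hη i h, ?_, (hη i h).trans (add_le_add le_rfl (hB1 i))⟩, ?_⟩
  · rw [← hB i h]
    exact hd i (by omega)
  -- Under the fence the edge `(p i, p (i + 1))` is the unique cheapest one at `p i`.
  have hgap : ∀ (i : ℕ) (h : i + 1 < p.length) (w : V), (p[i], w) ∈ G.E → w ≠ p[i + 1] →
      etaCost G.E (addc G c') G.t β (p[i], p[i + 1])
        < etaCost G.E (addc G c') G.t β (p[i], w) := by
    intro i h w hiw hne
    have hfence := hpf.2.2.2.2 i h w hiw hne
    simp only [List.get_eq_getElem] at hfence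
    have := hfence.ge.trans' (le_max_right _ _)
    rw [show etaCost G.E (addc G c') G.t β (p[i], w)
      = G.c (p[i], w) + c' (p[i], w) + β * dcost G.E (addc G c') G.t w from rfl]
    linarith
  have hζ : ∀ (i : ℕ) (h : i + 1 < p.length), zetaCost G.E (addc G c') G.t β p[i]
      = etaCost G.E (addc G c') G.t β (p[i], p[i + 1]) := by
    intro i h
    refine le_antisymm (zetaCost_le hc' hβ0.le (hedge i h) (G.reaches_t _)) ?_
    refine le_csInf ⟨_, _, hedge i h, G.reaches_t _, rfl⟩ ?_
    rintro _ ⟨w, hiw, -, rfl⟩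
    by_cases hne : w = p[i + 1]
    · rw [hne]
    · exact (hgap i h w hiw hne).le
  have hidx : ∀ v ∈ p, v ≠ G.t → ∃ (i : ℕ) (h : i + 1 < p.length), v = p[i] := by
    intro v hv hvt
    obtain ⟨i, hi, rfl⟩ := List.getElem_of_mem hv
    refine ⟨i, ?_, rfl⟩
    by_contra hcon
    apply hvt
    rw [List.getLast?_eq_getElem?, List.getElem?_eq_some_iff] at hlast
    obtain ⟨_, h⟩ := hlast
    rw [← h]
    congr 1
    omega
  have hmem : ∀ v, AgentReach G.E (addc G c') G.s G.t β (r + ε) v → v ∈ p := by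
    intro v hv
    induction hv with
    | start => exact List.mem_of_mem_head? hwalk.1.2.1
    | step _ hs ih =>
      obtain ⟨hvt, hvw, -, hmin, -⟩ := hs
      obtain ⟨i, h, rfl⟩ := hidx _ ih hvt
      by_contra hcon
      refine (hgap i h _ hvw fun heq => hcon (heq ▸ List.getElem_mem h)).ne' ?_
      rw [hmin, hζ i h]
  intro v hv hvt
  obtain ⟨i, h, rfl⟩ := hidx v (hmem v hv) hvt
  refine ⟨p[i + 1], hvt, hedge i h, G.reaches_t _, (hζ i h).symm, ?_⟩
  have hstep : GreedyStep G.E (addc G cstar) G.t β r p[i] p[i + 1] :=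
    List.isChain_iff_getElem.1 hwalk.2 i h
  obtain ⟨-, -, -, h1, h2⟩ := hstep
  rw [hζ i h]
  linarith [hη i h, hB1 i]
end

section
/- Let G be a task graph with present bias β ∈ (0,1] and let ϱ = min over directed s–t paths P of max{η_0̃(e) : e an edge of P}. Then there exists a cost configuration that is motivating for the reward 2ϱ/β. Combined with the lower bound that every reward admitting a motivating cost configuration is at least ϱ/β, the infimum of all rewards for which a motivating cost configuration exists lies in the interval [ϱ/β, 2ϱ/β]. -/
/-!
Lower bound: on a completed greedy walk every edge has perceived cost at most `β * r`, and extra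
costs only raise perceived costs, so the walk witnesses `ϱ ≤ β * r`
(`TaskGraph.minmaxRho_le_of_motivating`).

Upper bound (`TaskGraph.exists_motivatingConfig`): fix a minmax path `P` and a tree `T` of cheapest
paths to `t`. All edges outside `P ∪ T` are made prohibitively expensive. An edge of `T` leaving
`P` at `v` opens a detour along `T` that ends at the next vertex `u` of `P`; its first edge is
charged, on top, the cost `d v - d u` of the whole detour. A cheapest path splits into detours and
pieces of `P`, so distances to `t` at most double, and every edge of `P` has perceived cost at most
`2ϱ`. Hence the agent never gives up on `P`. She may well take a detour, but then she has accepted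
a perceived cost of at least `(d v - d u) + β * d' u`, where `d'` is the modified distance. At every
later node of the detour the lowest perceived cost is at most the undiscounted rest of the detour
plus `β * d' u`, which is no more than that, hence at most `2ϱ`.

Lists of vertices are eliminated early: distances enter only through the Bellman equations and
well-founded induction along the edges of the acyclic graph.
-/

/-!
Framework: task graphs, present-biased agents, perceived costs, greedy walks,
motivating rewards, cost configurations and subgraphs
(Kleinberg–Oren model, following Albers–Kraft).
-/

variable {V : Type} [Fintype V] [DecidableEq V]

/-- Maximum of `f` over the edges of a walk (`0` if the walk has no edges; all
relevant values are nonnegative). -/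
noncomputable def maxEdge (f : V × V → ℝ) (p : List V) : ℝ :=
  ((walkEdges p).map f).foldr max 0

/-- `ϱ`: the minimum over all `s`–`t` paths `P` of the maximum perceived edge cost
`η_0̃(e)` over the edges `e` of `P`. -/
noncomputable def minmaxRho (G : TaskGraph V) (β : ℝ) : ℝ :=
  sInf ((fun p => maxEdge (etaCost G.E G.c G.t β) p) ''
    {p : List V | IsWalkFrom G.E p G.s G.t})

/-! ### Walks -/

lemma walkEdges_cons_cons (a b : V) (l : List V) :
    walkEdges (a :: b :: l) = (a, b) :: walkEdges (b :: l) := rfl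

lemma isWalk_cons_cons (E : Finset (V × V)) (a b : V) (l : List V) :
    IsWalk E (a :: b :: l) ↔ (a, b) ∈ E ∧ IsWalk E (b :: l) := by
  unfold IsWalk
  exact List.isChain_cons_cons

lemma IsWalkFrom.eq_cons {E : Finset (V × V)} {p : List V} {a b : V}
    (h : IsWalkFrom E p a b) : ∃ q, p = a :: q := by
  obtain ⟨-, h, -⟩ := h
  cases p with
  | nil => simp at h
  | cons x q => simp at h; exact ⟨q, by rw [h]⟩

lemma IsWalkFrom.cons {E : Finset (V × V)} {p : List V} {a b v : V}
    (h : IsWalkFrom E p a b) (hv : (v, a) ∈ E) : IsWalkFrom E (v :: p) v b := by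
  obtain ⟨q, rfl⟩ := h.eq_cons
  refine ⟨(isWalk_cons_cons E v a q).2 ⟨hv, h.1⟩, rfl, ?_⟩
  have := h.2.2
  rwa [List.getLast?_cons_cons]

lemma isWalkFrom_singleton (E : Finset (V × V)) (a : V) : IsWalkFrom E [a] a a :=
  ⟨List.isChain_singleton a, rfl, rfl⟩

/-- A walk with distinct endpoints splits into its first edge and the remaining walk. -/
lemma IsWalkFrom.uncons {E : Finset (V × V)} {p : List V} {a b : V}
    (h : IsWalkFrom E p a b) (hab : a ≠ b) :
    ∃ w q, p = a :: w :: q ∧ (a, w) ∈ E ∧ IsWalkFrom E (w :: q) w b := by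
  obtain ⟨q, rfl⟩ := h.eq_cons
  cases q with
  | nil => exact absurd (by simpa using h.2.2) hab
  | cons w q =>
    obtain ⟨h1, h2⟩ := (isWalk_cons_cons E a w q).1 h.1
    refine ⟨w, q, rfl, h1, h2, rfl, ?_⟩
    have := h.2.2
    rwa [List.getLast?_cons_cons] at this

namespace TaskGraph

variable (G : TaskGraph V)

lemma reaches (v : V) : Reaches G.E v G.t := by
  obtain ⟨p, hp, hv⟩ := G.onPath v
  obtain ⟨l₁, l₂, rfl⟩ := List.append_of_mem hv
  refine ⟨v :: l₂, ?_, rfl, ?_⟩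
  · exact (List.isChain_append.1 hp.1).2.1
  · have := hp.2.2
    rwa [List.getLast?_append_cons] at this

lemma finite_walks (a b : V) : {p : List V | IsWalkFrom G.E p a b}.Finite := by
  have : {p : List V | p.length ≤ Fintype.card V}.Finite := List.finite_length_le V _
  exact this.subset fun p hp => (G.acyclic p hp.1).length_le_card

lemma eq_singleton {p : List V} {a : V} (h : IsWalkFrom G.E p a a) : p = [a] := by
  obtain ⟨q, rfl⟩ := h.eq_cons
  have hn := G.acyclic _ h.1
  cases q with
  | nil => rfl
  | cons b q =>
    have h2 := h.2.2
    rw [List.getLast?_cons_cons] at h2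
    exact absurd (List.mem_of_getLast? h2) (List.nodup_cons.1 hn).1

/-- The successor relation of the finite acyclic graph is well-founded, which permits induction
from `t` backwards. -/
lemma wf : WellFounded (fun w v : V => (v, w) ∈ G.E) := by
  have key : ∀ {a b : V}, Relation.TransGen (fun w v : V => (v, w) ∈ G.E) a b →
      ∃ p, IsWalkFrom G.E p b a ∧ p ≠ [b] := by
    intro a b h
    induction h with
    | single h => exact ⟨_, (isWalkFrom_singleton G.E a).cons h, by simp⟩
    | tail _ h ih =>
      obtain ⟨p, hp, -⟩ := ih
      obtain ⟨q, rfl⟩ := hp.eq_cons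
      exact ⟨_, hp.cons h, by simp⟩
  have : Std.Irrefl (Relation.TransGen (fun w v : V => (v, w) ∈ G.E)) := by
    constructor
    intro a h
    obtain ⟨p, hp, hne⟩ := key h
    exact hne (G.eq_singleton hp)
  have hw := Finite.wellFounded_of_trans_of_irrefl
    (Relation.TransGen (fun w v : V => (v, w) ∈ G.E))
  exact Subrelation.wf (fun h => Relation.TransGen.single h) hw

/-! ### Distances: the Bellman equations -/

lemma dcost_attained (c : V × V → ℝ) (v : V) :
    ∃ p, IsWalkFrom G.E p v G.t ∧ walkCost c p = dcost G.E c G.t v := by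
  obtain ⟨p, hp⟩ := G.reaches v
  have := ((Set.Nonempty.image (walkCost c) ⟨p, hp⟩)).csInf_mem
    ((G.finite_walks v G.t).image (walkCost c))
  obtain ⟨q, hq, h⟩ := this
  exact ⟨q, hq, h⟩

lemma dcost_le_walkCost (c : V × V → ℝ) {v : V} {p : List V} (hp : IsWalkFrom G.E p v G.t) :
    dcost G.E c G.t v ≤ walkCost c p :=
  csInf_le ((G.finite_walks v G.t).image (walkCost c)).bddBelow ⟨p, hp, rfl⟩

lemma dcost_target (c : V × V → ℝ) : dcost G.E c G.t G.t = 0 := by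
  obtain ⟨p, hp, h⟩ := G.dcost_attained c G.t
  rw [← h, G.eq_singleton hp]
  simp [walkCost, walkEdges]

lemma dcost_le (c : V × V → ℝ) {v w : V} (h : (v, w) ∈ G.E) :
    dcost G.E c G.t v ≤ c (v, w) + dcost G.E c G.t w := by
  obtain ⟨p, hp, hc⟩ := G.dcost_attained c w
  have := G.dcost_le_walkCost c (hp.cons h)
  obtain ⟨q, rfl⟩ := hp.eq_cons
  rw [← hc]
  simpa [walkCost, walkEdges_cons_cons] using this

lemma exists_dcost_eq (c : V × V → ℝ) {v : V} (h : v ≠ G.t) :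
    ∃ w, (v, w) ∈ G.E ∧ dcost G.E c G.t v = c (v, w) + dcost G.E c G.t w := by
  obtain ⟨p, hp, hc⟩ := G.dcost_attained c v
  obtain ⟨w, q, rfl, hvw, hq⟩ := hp.uncons h
  refine ⟨w, hvw, le_antisymm (G.dcost_le c hvw) ?_⟩
  have := G.dcost_le_walkCost c hq
  rw [← hc]
  simpa [walkCost, walkEdges_cons_cons] using this

lemma dcost_nonneg {c : V × V → ℝ} (hc : ∀ e ∈ G.E, 0 ≤ c e) (v : V) :
    0 ≤ dcost G.E c G.t v := by
  induction v using G.wf.induction with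
  | _ v ih =>
    by_cases h : v = G.t
    · rw [h, dcost_target]
    · obtain ⟨w, hw, he⟩ := G.exists_dcost_eq c h
      rw [he]
      exact add_nonneg (hc _ hw) (ih w hw)

lemma dcost_mono {c c₁ : V × V → ℝ} (hc : ∀ e ∈ G.E, c e ≤ c₁ e) (v : V) :
    dcost G.E c G.t v ≤ dcost G.E c₁ G.t v := by
  induction v using G.wf.induction with
  | _ v ih =>
    by_cases h : v = G.t
    · rw [h, dcost_target, dcost_target]
    · obtain ⟨w, hw, he⟩ := G.exists_dcost_eq c₁ h
      rw [he]
      exact (G.dcost_le c hw).trans (add_le_add (hc _ hw) (ih w hw))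

/-! ### Lowest perceived costs -/

lemma finite_eta (c : V × V → ℝ) (β : ℝ) (v : V) :
    {x : ℝ | ∃ w : V, (v, w) ∈ G.E ∧ Reaches G.E w G.t ∧
      etaCost G.E c G.t β (v, w) = x}.Finite :=
  (Set.finite_range fun w => etaCost G.E c G.t β (v, w)).subset
    fun _ ⟨w, _, _, h⟩ => ⟨w, h⟩

lemma zetaCost_le (c : V × V → ℝ) (β : ℝ) {v w : V} (h : (v, w) ∈ G.E) :
    zetaCost G.E c G.t β v ≤ etaCost G.E c G.t β (v, w) :=
  csInf_le (G.finite_eta c β v).bddBelow ⟨w, h, G.reaches w, rfl⟩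

lemma exists_greedyStep (c : V × V → ℝ) (β r : ℝ) {v : V} (hv : v ≠ G.t)
    (h : zetaCost G.E c G.t β v ≤ β * r) : ∃ w, GreedyStep G.E c G.t β r v w := by
  obtain ⟨w, hw, -⟩ := G.exists_dcost_eq c hv
  have hne : {x : ℝ | ∃ w : V, (v, w) ∈ G.E ∧ Reaches G.E w G.t ∧
      etaCost G.E c G.t β (v, w) = x}.Nonempty := ⟨_, w, hw, G.reaches w, rfl⟩
  obtain ⟨x, hx, hr, he⟩ := hne.csInf_mem (G.finite_eta c β v)
  exact ⟨x, hv, hx, hr, he, h⟩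

/-- Raising the reward creates no new greedy moves at nodes where the agent was already willing
to continue. -/
lemma motivating_mono {c : V × V → ℝ} {β r r₁ : ℝ} (hβ : 0 < β) (hr : r ≤ r₁)
    (h : Motivating G.E c G.s G.t β r) : Motivating G.E c G.s G.t β r₁ := by
  have hle : β * r ≤ β * r₁ := mul_le_mul_of_nonneg_left hr hβ.le
  have key : ∀ v, AgentReach G.E c G.s G.t β r₁ v → AgentReach G.E c G.s G.t β r v := by
    intro v hv
    induction hv with
    | start => exact .start
    | step _ hs ih =>
      obtain ⟨x, hx⟩ := h _ ih hs.1
      exact .step ih ⟨hs.1, hs.2.1, hs.2.2.1, hs.2.2.2.1, hx.2.2.2.2⟩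
  intro v hv hvt
  obtain ⟨w, h1, h2, h3, h4, h5⟩ := h v (key v hv) hvt
  exact ⟨w, h1, h2, h3, h4, h5.trans hle⟩

/-! ### The minmax value -/

lemma maxEdge_cons_cons (f : V × V → ℝ) (a b : V) (l : List V) :
    maxEdge f (a :: b :: l) = max (f (a, b)) (maxEdge f (b :: l)) := rfl

lemma maxEdge_nonneg (f : V × V → ℝ) (p : List V) : 0 ≤ maxEdge f p := by
  unfold maxEdge
  induction (walkEdges p).map f with
  | nil => simp
  | cons x l ih => exact le_max_of_le_right ih

lemma minmaxRho_attained (β : ℝ) :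
    ∃ p, IsWalkFrom G.E p G.s G.t ∧ maxEdge (etaCost G.E G.c G.t β) p = minmaxRho G β := by
  obtain ⟨p, hp⟩ := G.reaches G.s
  obtain ⟨q, hq, h⟩ := (Set.Nonempty.image (maxEdge (etaCost G.E G.c G.t β))
    ⟨p, hp⟩).csInf_mem ((G.finite_walks G.s G.t).image _)
  exact ⟨q, hq, h⟩

lemma minmaxRho_le (β : ℝ) {p : List V} (hp : IsWalkFrom G.E p G.s G.t) :
    minmaxRho G β ≤ maxEdge (etaCost G.E G.c G.t β) p :=
  csInf_le ((G.finite_walks G.s G.t).image _).bddBelow ⟨p, hp, rfl⟩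

lemma minmaxRho_nonneg (β : ℝ) : 0 ≤ minmaxRho G β := by
  obtain ⟨p, -, h⟩ := G.minmaxRho_attained β
  exact h ▸ maxEdge_nonneg _ p

lemma exists_next_of_walk (f : V × V → ℝ) {p : List V} {a b : V} (hp : IsWalkFrom G.E p a b) :
    b ∈ p ∧ ∀ v ∈ p, v ≠ b → ∃ w ∈ p, (v, w) ∈ G.E ∧ f (v, w) ≤ maxEdge f p := by
  refine ⟨List.mem_of_getLast? hp.2.2, ?_⟩
  induction p generalizing a with
  | nil => simp
  | cons x l ih =>
    intro v hv hvb
    obtain ⟨q, hq⟩ := hp.eq_cons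
    obtain ⟨rfl, rfl⟩ := List.cons.inj hq
    by_cases hxb : x = b
    · subst hxb
      have := G.eq_singleton hp
      rw [this] at hv
      exact absurd (by simpa using hv) hvb
    · obtain ⟨w, q, hq, hxw, hw⟩ := hp.uncons hxb
      obtain ⟨-, rfl⟩ := List.cons.inj hq
      rw [maxEdge_cons_cons]
      rcases List.mem_cons.1 hv with rfl | hv
      · exact ⟨w, by simp, hxw, le_max_left _ _⟩
      · obtain ⟨y, hy, h1, h2⟩ := ih hw v hv hvb
        exact ⟨y, List.mem_cons_of_mem _ hy, h1, h2.trans (le_max_right _ _)⟩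

/-- The minmax path as a vertex set `P` with a successor map `π`, all of whose edges have
perceived cost at most `ϱ`. -/
lemma exists_minmax (β : ℝ) : ∃ (P : Set V) (π : V → V), G.s ∈ P ∧ G.t ∈ P ∧
    ∀ v ∈ P, v ≠ G.t → π v ∈ P ∧ (v, π v) ∈ G.E ∧
      etaCost G.E G.c G.t β (v, π v) ≤ minmaxRho G β := by
  obtain ⟨p, hp, hm⟩ := G.minmaxRho_attained β
  obtain ⟨ht, hn⟩ := G.exists_next_of_walk (etaCost G.E G.c G.t β) hp
  have : ∀ v, ∃ w, v ∈ p → v ≠ G.t → w ∈ p ∧ (v, w) ∈ G.E ∧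
      etaCost G.E G.c G.t β (v, w) ≤ minmaxRho G β := by
    intro v
    by_cases h : v ∈ p ∧ v ≠ G.t
    · obtain ⟨w, h1, h2, h3⟩ := hn v h.1 h.2
      exact ⟨w, fun _ _ => ⟨h1, h2, hm ▸ h3⟩⟩
    · exact ⟨v, fun h1 h2 => absurd ⟨h1, h2⟩ h⟩
  choose π hπ using this
  refine ⟨{v | v ∈ p}, π, ?_, ht, fun v hv hvt => hπ v hv hvt⟩
  obtain ⟨q, rfl⟩ := hp.eq_cons
  simp

/-- Every edge the agent traverses has modified, hence also original, perceived cost at most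
`β * r`, so a completed greedy walk is a candidate in the definition of `ϱ`. -/
lemma minmaxRho_le_of_motivating {β r : ℝ} {c' : V × V → ℝ} (hβ : 0 < β) (hr : 0 < r)
    (hc' : CostConfig c') (h : MotivatingConfig G β r c') : minmaxRho G β ≤ β * r := by
  have hc : ∀ e ∈ G.E, G.c e ≤ addc G c' e := fun e _ => le_add_of_nonneg_right (hc' e)
  have key : ∀ v, AgentReach G.E (addc G c') G.s G.t β r v →
      ∃ p, IsWalkFrom G.E p v G.t ∧ maxEdge (etaCost G.E G.c G.t β) p ≤ β * r := by
    intro v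
    induction v using G.wf.induction with
    | _ v ih =>
      intro hv
      by_cases hvt : v = G.t
      · refine ⟨[v], hvt ▸ isWalkFrom_singleton G.E v, ?_⟩
        simpa [maxEdge, walkEdges] using (mul_pos hβ hr).le
      · obtain ⟨w, hw⟩ := h v hv hvt
        obtain ⟨p, hp, hm⟩ := ih w hw.2.1 (hv.step hw)
        refine ⟨v :: p, hp.cons hw.2.1, ?_⟩
        obtain ⟨q, rfl⟩ := hp.eq_cons
        rw [maxEdge_cons_cons]
        refine max_le (le_trans ?_ (hw.2.2.2.1.trans_le hw.2.2.2.2)) hm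
        exact add_le_add (hc _ hw.2.1) (mul_le_mul_of_nonneg_left (G.dcost_mono hc w) hβ.le)
  obtain ⟨p, hp, hm⟩ := key G.s .start
  exact (G.minmaxRho_le β hp).trans hm

/-! ### A configuration motivating for `2ϱ/β` -/

/-- First-hit map: iterating `f` from `x` until the set `P` is met. -/
lemma exists_firstHit {f : V → V} {P : Set V} (hf : ∀ x, x ∉ P → (x, f x) ∈ G.E) :
    ∃ u : V → V, (∀ x ∈ P, u x = x) ∧ ∀ x, x ∉ P → u x = u (f x) := by
  classical
  refine ⟨G.wf.fix fun x ih => if h : x ∈ P then x else ih (f x) (hf x h), ?_, ?_⟩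
  · intro x hx
    rw [WellFounded.fix_eq, dif_pos hx]
  · intro x hx
    rw [WellFounded.fix_eq, dif_neg hx]

/-- Cheapest-path successors, extended by `t ↦ t`. -/
lemma exists_cheapest_succ : ∃ σ : V → V, σ G.t = G.t ∧ ∀ v, v ≠ G.t → (v, σ v) ∈ G.E ∧
    dcost G.E G.c G.t v = G.c (v, σ v) + dcost G.E G.c G.t (σ v) := by
  have : ∀ v, ∃ w, (v = G.t → w = G.t) ∧ (v ≠ G.t → (v, w) ∈ G.E ∧
      dcost G.E G.c G.t v = G.c (v, w) + dcost G.E G.c G.t w) := by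
    intro v
    by_cases h : v = G.t
    · exact ⟨G.t, fun _ => rfl, fun h1 => absurd h h1⟩
    · obtain ⟨w, hw⟩ := G.exists_dcost_eq G.c h
      exact ⟨w, fun h1 => absurd h1 h, fun _ => hw⟩
  choose σ h1 h2 using this
  exact ⟨σ, h1 _ rfl, h2⟩

open Classical in
/-- The extra costs: edges of the path (`P`, `π`) are free; a cheapest-path edge `(v, σ v)` that
leaves it is charged the cost `d v - d (u (σ v))` of the whole detour up to its next vertex
`u (σ v)` on `P`; off `P`, cheapest-path edges are free; all remaining edges cost `M`. -/
noncomputable def detourConfig (P : Set V) (π σ u : V → V) (d : V → ℝ) (M : ℝ) :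
    V × V → ℝ := fun e =>
  if e.1 ∈ P ∧ e.2 = π e.1 then 0
  else if e.2 = σ e.1 then (if e.1 ∈ P then d e.1 - d (u (σ e.1)) else 0)
  else M

lemma exists_motivatingConfig {β : ℝ} (hβ0 : 0 < β) (hβ1 : β ≤ 1) :
    ∃ c' : V × V → ℝ, CostConfig c' ∧
      MotivatingConfig G β (2 * minmaxRho G β / β) c' := by
  classical
  obtain ⟨P, π, hsP, htP, hπ⟩ := G.exists_minmax β
  obtain ⟨σ, hσt, hσ⟩ := G.exists_cheapest_succ
  have hne : ∀ x, x ∉ P → x ≠ G.t := fun x hx h => hx (h ▸ htP)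
  obtain ⟨u, huP, huσ⟩ := G.exists_firstHit (f := σ) (P := P)
    fun x hx => (hσ x (hne x hx)).1
  set ρ := minmaxRho G β with hρ
  have hρ0 : 0 ≤ ρ := G.minmaxRho_nonneg β
  set d : V → ℝ := dcost G.E G.c G.t with hd
  have hd0 : ∀ v, 0 ≤ d v := G.dcost_nonneg G.c_nonneg
  have hσle : ∀ v, d (σ v) ≤ d v := by
    intro v
    by_cases h : v = G.t
    · rw [h, hσt]
    · have h1 := hσ v h
      linarith [G.c_nonneg _ h1.1, h1.2]
  have hule : ∀ v, d (u v) ≤ d v := by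
    intro v
    induction v using G.wf.induction with
    | _ v ih =>
      by_cases h : v ∈ P
      · rw [huP v h]
      · rw [huσ v h]
        exact (ih _ (hσ v (hne v h)).1).trans (hσle v)
  -- `M` exceeds both the budget `2ϱ` and every modified distance, which is at most `2 * d`.
  obtain ⟨M, hMρ, hMd⟩ : ∃ M : ℝ, 2 * ρ < M ∧ ∀ v, 2 * d v ≤ M := by
    refine ⟨2 * ρ + 1 + 2 * ∑ v, d v, ?_, fun v => ?_⟩
    · linarith [Finset.sum_nonneg fun v (_ : v ∈ Finset.univ) => hd0 v]
    · linarith [Finset.single_le_sum (fun v _ => hd0 v) (Finset.mem_univ v)]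
  set c' := detourConfig P π σ u d M with hc'
  have cπ : ∀ v ∈ P, c' (v, π v) = 0 := fun v hv => if_pos ⟨hv, rfl⟩
  have cσP : ∀ v ∈ P, σ v ≠ π v → c' (v, σ v) = d v - d (u (σ v)) := by
    intro v hv h
    simp [hc', detourConfig, hv, h]
  have cσ : ∀ v, v ∉ P → c' (v, σ v) = 0 := by
    intro v hv
    simp [hc', detourConfig, hv]
  have cM : ∀ v w, ¬ (v ∈ P ∧ w = π v) → w ≠ σ v → c' (v, w) = M := by
    intro v w h1 h2
    simp only [hc', detourConfig]
    rw [if_neg h1, if_neg h2]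
  have hcc : CostConfig c' := by
    rintro ⟨v, w⟩
    simp only [hc', detourConfig]
    split_ifs
    · exact le_rfl
    · linarith [hule (σ v), hσle v]
    · exact le_rfl
    · linarith
  have hcE : ∀ e ∈ G.E, 0 ≤ addc G c' e := fun e he => add_nonneg (G.c_nonneg e he) (hcc e)
  refine ⟨c', hcc, ?_⟩
  set d' : V → ℝ := dcost G.E (addc G c') G.t with hd'
  have hd'0 : ∀ v, 0 ≤ d' v := G.dcost_nonneg hcE
  have hstep : ∀ v w, (v, w) ∈ G.E → d' v ≤ G.c (v, w) + c' (v, w) + d' w :=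
    fun v w h => G.dcost_le (addc G c') h
  -- Off `P` only the part of the cheapest path beyond `u v` can be surcharged; this sharper form of
  -- `d' v ≤ 2 * d v` pays for the surcharge `d v - d (u (σ v))` when a detour starts at `v`.
  have hup : ∀ v, d' v ≤ d v + d (u v) := by
    intro v
    induction v using G.wf.induction with
    | _ v ih =>
      by_cases hvt : v = G.t
      · rw [hvt]
        have : d' G.t = 0 := G.dcost_target _
        linarith [hd0 G.t, hd0 (u G.t)]
      obtain ⟨hE, heq⟩ := hσ v hvt
      have h1 := hstep v _ hE
      have h2 := ih _ hE
      by_cases hP : v ∈ P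
      · rw [huP v hP]
        by_cases hsp : σ v = π v
        · have h3 : c' (v, σ v) = 0 := by rw [hsp]; exact cπ v hP
          linarith [G.c_nonneg _ hE, hule (σ v)]
        · have h3 := cσP v hP hsp
          linarith
      · rw [huσ v hP]
        have h3 := cσ v hP
        linarith
  have hup2 : ∀ v, d' v ≤ 2 * d v := fun v => by linarith [hup v, hule v]
  have hvia : ∀ v, d' v ≤ d v - d (u v) + d' (u v) := by
    intro v
    induction v using G.wf.induction with
    | _ v ih =>
      by_cases hP : v ∈ P
      · rw [huP v hP]
        linarith
      · obtain ⟨hE, heq⟩ := hσ v (hne v hP)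
        have h1 := hstep v _ hE
        have h2 := ih _ hE
        have h3 := cσ v hP
        rw [huσ v hP]
        linarith
  -- Off `P` every alternative to the cheapest-path edge costs at least `M`.
  have hlow : ∀ v, d' (u v) ≤ d' v := by
    intro v
    induction v using G.wf.induction with
    | _ v ih =>
      by_cases hP : v ∈ P
      · rw [huP v hP]
      · obtain ⟨w, hE, heq⟩ := G.exists_dcost_eq (addc G c') (hne v hP)
        change d' v = G.c (v, w) + c' (v, w) + d' w at heq
        have h0 := G.c_nonneg _ hE
        have h1 := ih w hE
        by_cases hw : w = σ v
        · have h2 := hcc (v, w)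
          rw [huσ v hP, ← hw]
          linarith
        · have h2 := cM v w (fun h => hP h.1) hw
          linarith [hup2 (u v), hMd (u v), hd'0 w]
  have hβr : β * (2 * ρ / β) = 2 * ρ := by field_simp
  have hη : ∀ v w, etaCost G.E (addc G c') G.t β (v, w) =
      G.c (v, w) + c' (v, w) + β * d' w := fun v w => rfl
  -- A node is good if the agent can afford it: it is on `P`, or the rest of the detour, counted
  -- at full cost, still fits the budget.
  have hζ : ∀ v, v ≠ G.t → (v ∈ P ∨ d v - d (u v) + β * d' (u v) ≤ 2 * ρ) →
      zetaCost G.E (addc G c') G.t β v ≤ 2 * ρ := by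
    intro v hvt hgood
    by_cases hP : v ∈ P
    · obtain ⟨-, hE, hle⟩ := hπ v hP hvt
      have hle' : G.c (v, π v) + β * d (π v) ≤ ρ := hle
      refine (G.zetaCost_le _ β hE).trans ?_
      rw [hη, cπ v hP]
      have := mul_le_mul_of_nonneg_left (hup2 (π v)) hβ0.le
      linarith [G.c_nonneg _ hE]
    · have hg := hgood.resolve_left hP
      obtain ⟨hE, heq⟩ := hσ v hvt
      refine (G.zetaCost_le _ β hE).trans ?_
      rw [hη, cσ v hP]
      rw [huσ v hP] at hg
      have h1 := mul_le_mul_of_nonneg_left (hvia (σ v)) hβ0.le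
      have h2 : β * (d (σ v) - d (u (σ v))) ≤ 1 * (d (σ v) - d (u (σ v))) :=
        mul_le_mul_of_nonneg_right hβ1 (by linarith [hule (σ v)])
      linarith
  have hinv : ∀ v, AgentReach G.E (addc G c') G.s G.t β (2 * ρ / β) v →
      (v ∈ P ∨ d v - d (u v) + β * d' (u v) ≤ 2 * ρ) := by
    intro v hv
    induction hv with
    | start => exact Or.inl hsP
    | @step v w _ hs ih =>
      obtain ⟨hvt, hE, -, heq, hle⟩ := hs
      have hle' : G.c (v, w) + c' (v, w) + β * d' w ≤ 2 * ρ := by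
        rw [← hη, heq, ← hβr]
        exact hle
      have h0 := G.c_nonneg _ hE
      have hw0 := mul_nonneg hβ0.le (hd'0 w)
      by_cases h1 : v ∈ P ∧ w = π v
      · exact Or.inl (h1.2 ▸ (hπ v h1.1 hvt).1)
      by_cases h2 : w = σ v
      · right
        subst h2
        by_cases hP : v ∈ P
        · -- The detour was charged in advance, so the surcharge covers its remaining cost.
          have h3 := cσP v hP fun h => h1 ⟨hP, h⟩
          have h4 := mul_le_mul_of_nonneg_left (hlow (σ v)) hβ0.le
          linarith [hσle v]
        · have hg := ih.resolve_left hP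
          rw [huσ v hP] at hg
          linarith [hσle v]
      · have h3 := cM v w h1 h2
        linarith
  intro v hv hvt
  exact G.exists_greedyStep _ β _ hvt ((hζ v hvt (hinv v hv)).trans hβr.ge)

end TaskGraph

/-- There exists a cost configuration motivating for the reward
`2ϱ/β`; combined with the lower bound `ϱ/β` on every motivating reward, the
infimum of rewards admitting a motivating cost configuration lies in `[ϱ/β, 2ϱ/β]`. -/
theorem stmt_10 (G : TaskGraph V) (β : ℝ) (hβ0 : 0 < β) (hβ1 : β ≤ 1) :
    (∃ c' : V × V → ℝ, CostConfig c' ∧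
        MotivatingConfig G β (2 * minmaxRho G β / β) c') ∧
      minmaxRho G β / β ≤
        sInf {r : ℝ | 0 < r ∧ ∃ c' : V × V → ℝ,
          CostConfig c' ∧ MotivatingConfig G β r c'} ∧
      sInf {r : ℝ | 0 < r ∧ ∃ c' : V × V → ℝ,
          CostConfig c' ∧ MotivatingConfig G β r c'} ≤ 2 * minmaxRho G β / β := by
  obtain ⟨c', hc', hm⟩ := G.exists_motivatingConfig hβ0 hβ1
  have h0 : 0 ≤ 2 * minmaxRho G β / β :=
    div_nonneg (mul_nonneg zero_le_two (G.minmaxRho_nonneg β)) hβ0.le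
  -- Only positive rewards are admitted, while `2ϱ/β` may be `0`; so it is approached from above.
  have hmem : ∀ ε > 0, 2 * minmaxRho G β / β + ε ∈ {r : ℝ | 0 < r ∧ ∃ c' : V × V → ℝ,
      CostConfig c' ∧ MotivatingConfig G β r c'} := fun ε hε =>
    ⟨by linarith, c', hc', G.motivating_mono hβ0 (by linarith) hm⟩
  refine ⟨⟨c', hc', hm⟩, le_csInf ⟨_, hmem 1 one_pos⟩ ?_, ?_⟩
  · rintro r ⟨hr, c₁, hc₁, h⟩
    rw [div_le_iff₀ hβ0, mul_comm]
    exact G.minmaxRho_le_of_motivating hβ0 hr hc₁ h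
  · exact le_of_forall_pos_le_add fun ε hε =>
      csInf_le ⟨0, fun r hr => hr.1.le⟩ (hmem ε hε)
end
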